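/- arXiv:2011.10876 — 2 statements merged into one kernel-verified Lean document; each statement's English description precedes it below -/
import Mathlib

section
/- Suppose that for each i ∈ ℕ the set A_i ⊆ ℝ^{n_i} is nonempty and closed, the family (A_i)_{i∈ℕ} is uniformly bounded, and there exist κ₁, κ₂ of class K∞ such that one of the following two conditions holds for all i ∈ ℕ and all ξ_i ∈ ℝ^{n_i}, ξ̄_i ∈ X(I_i), μ_i ∈ ℝ^{p_i}: (a) |f_i(ξ_i, ξ̄_i, μ_i)|_{A_i} ≤ κ₁(|ξ_i|_{A_i}) + κ₂(|ξ̄_i|) + κ₂(|μ_i|), or (b) |f_i(ξ_i, ξ̄_i, μ_i)|_{A_i} ≤ κ₁(|ξ_i|_{A_i}) + κ₂(max_{j∈I_i} |ξ_j|_{A_j}) + κ₂(|μ_i|). Then the network Σ is well-posed. -/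
noncomputable section

/-- Class `K` comparison functions on `[0,∞)`. -/
def ClassK (γ : ℝ → ℝ) : Prop :=
  ContinuousOn γ (Set.Ici 0) ∧ StrictMonoOn γ (Set.Ici 0) ∧ γ 0 = 0

/-- Class `K∞` comparison functions: class `K` and unbounded. -/
def ClassKinf (γ : ℝ → ℝ) : Prop :=
  ClassK γ ∧ ∀ c : ℝ, ∃ s : ℝ, 0 ≤ s ∧ c < γ s

/-- Class `KL` comparison functions. -/
def ClassKL (β : ℝ → ℝ → ℝ) : Prop :=
  ContinuousOn (fun p : ℝ × ℝ => β p.1 p.2) (Set.Ici 0 ×ˢ Set.Ici 0) ∧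
    (∀ t : ℝ, 0 ≤ t → ClassK fun r => β r t) ∧
    (∀ r : ℝ, 0 < r → StrictAntiOn (β r) (Set.Ici 0) ∧
      Filter.Tendsto (fun t => β r t) Filter.atTop (nhds 0))

section Network

variable {E : ℕ → Type*} [∀ i, NormedAddCommGroup (E i)]
variable {P : ℕ → Type*} [∀ i, NormedAddCommGroup (P i)]

/-- Membership in `ℓ∞(ℕ,(n_i))`: a uniformly bounded sequence. -/
def Bdd {G : ℕ → Type*} [∀ i, NormedAddCommGroup (G i)] (x : ∀ i, G i) : Prop :=
  ∃ C : ℝ, ∀ i, ‖x i‖ ≤ C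

/-- The sup norm `|x|_∞ = sup_i |x_i|`. -/
def supNorm {G : ℕ → Type*} [∀ i, NormedAddCommGroup (G i)] (x : ∀ i, G i) : ℝ :=
  ⨆ i, ‖x i‖

/-- Admissible external input signals: uniformly bounded sequences in `U`. -/
def AdmInput {G : ℕ → Type*} [∀ i, NormedAddCommGroup (G i)] (u : ℕ → ∀ i, G i) : Prop :=
  ∃ C : ℝ, ∀ k i, ‖u k i‖ ≤ C

/-- `‖u‖_∞ = sup_k |u(k)|_∞`. -/
def inputNorm {G : ℕ → Type*} [∀ i, NormedAddCommGroup (G i)] (u : ℕ → ∀ i, G i) : ℝ :=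
  ⨆ k, supNorm (u k)

/-- The set `A = X ∩ ∏_i A_i`. -/
def setA (A : ∀ i, Set (E i)) : Set (∀ i, E i) :=
  {y | Bdd y ∧ ∀ i, y i ∈ A i}

/-- The distance `|x|_A = inf_{y ∈ A} |x − y|_∞` from `x` to a set `A ⊆ X`. -/
def distA (x : ∀ i, E i) (A : Set (∀ i, E i)) : ℝ :=
  sInf ((fun y => supNorm (x - y)) '' A)

variable (I : ℕ → Finset ℕ)

/-- The network map `f(x,u) = (f_i(x_i, x̄_i, u_i))_{i∈ℕ}`. -/
def netF (f : ∀ i, E i → ((j : I i) → E j.1) → P i → E i)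
    (x : ∀ i, E i) (u : ∀ i, P i) : ∀ i, E i :=
  fun i => f i (x i) (fun j => x j.1) (u i)

/-- Solution of the discrete-time system `x⁺ = F(x,u)` in the extended state space. -/
def traj (F : (∀ i, E i) → (∀ i, P i) → ∀ i, E i)
    (ξ : ∀ i, E i) (u : ℕ → ∀ i, P i) : ℕ → ∀ i, E i
  | 0 => ξ
  | k + 1 => F (traj F ξ u k) (u k)

/-! Since the sets `A i` are uniformly bounded, `‖x i‖` and `infDist (x i) (A i)` differ by at most
a constant independent of `i`. Boundedness of a sequence can therefore be tested on its distances
to the `A i`, which is where the gain inequalities give a bound. -/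

theorem ClassKinf.monotoneOn {γ : ℝ → ℝ} (hγ : ClassKinf γ) : MonotoneOn γ (Set.Ici 0) :=
  hγ.1.2.1.monotoneOn

section InfDist

variable {G : Type*} [SeminormedAddCommGroup G] {s : Set G} {C : ℝ}

theorem infDist_le_norm_add (hs : s.Nonempty) (hC : ∀ a ∈ s, ‖a‖ ≤ C) (x : G) :
    Metric.infDist x s ≤ ‖x‖ + C := by
  obtain ⟨a, ha⟩ := hs
  calc Metric.infDist x s ≤ dist x a := Metric.infDist_le_dist_of_mem ha
    _ ≤ ‖x‖ + ‖a‖ := dist_le_norm_add_norm x a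
    _ ≤ ‖x‖ + C := by gcongr; exact hC a ha

theorem norm_le_infDist_add (hs : s.Nonempty) (hC : ∀ a ∈ s, ‖a‖ ≤ C) (x : G) :
    ‖x‖ ≤ Metric.infDist x s + C := by
  rw [← sub_le_iff_le_add, Metric.le_infDist hs]
  intro a ha
  calc ‖x‖ - C ≤ ‖x‖ - ‖a‖ := by gcongr; exact hC a ha
    _ ≤ dist x a := by rw [dist_eq_norm]; exact norm_sub_norm_le x a

end InfDist

theorem bdd_iff_exists_infDist_le {A : ∀ i, Set (E i)} (hne : ∀ i, (A i).Nonempty)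
    (hub : ∃ C : ℝ, ∀ i, ∀ a ∈ A i, ‖a‖ ≤ C) {x : ∀ i, E i} :
    Bdd x ↔ ∃ D : ℝ, ∀ i, Metric.infDist (x i) (A i) ≤ D := by
  obtain ⟨C, hC⟩ := hub
  constructor
  · rintro ⟨R, hR⟩
    exact ⟨R + C, fun i => (infDist_le_norm_add (hne i) (hC i) (x i)).trans (by grw [hR i])⟩
  · rintro ⟨D, hD⟩
    exact ⟨D + C, fun i => (norm_le_infDist_add (hne i) (hC i) (x i)).trans (by grw [hD i])⟩

theorem stmt11_general
    (f : ∀ i, E i → ((j : I i) → E j.1) → P i → E i)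
    (A : ∀ i, Set (E i)) (hne : ∀ i, (A i).Nonempty)
    (hub : ∃ C : ℝ, ∀ i, ∀ a ∈ A i, ‖a‖ ≤ C)
    (κ₁ κ₂ : ℝ → ℝ) (hκ₁ : MonotoneOn κ₁ (Set.Ici 0)) (hκ₂ : MonotoneOn κ₂ (Set.Ici 0))
    (hKb : ∀ (i : ℕ) (ξi : E i) (ξb : (j : I i) → E j.1) (μi : P i),
      Metric.infDist (f i ξi ξb μi) (A i) ≤
          κ₁ (Metric.infDist ξi (A i)) + κ₂ ‖ξb‖ + κ₂ ‖μi‖ ∨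
        Metric.infDist (f i ξi ξb μi) (A i) ≤
          κ₁ (Metric.infDist ξi (A i)) +
            κ₂ (⨆ j : I i, Metric.infDist (ξb j) (A j.1)) + κ₂ ‖μi‖)
    (x : ∀ i, E i) (u : ∀ i, P i) (hx : Bdd x) (hu : Bdd u) : Bdd (netF I f x u) := by
  obtain ⟨D, hD⟩ := (bdd_iff_exists_infDist_le hne hub).1 hx
  obtain ⟨R, hR⟩ := hx
  obtain ⟨M, hM⟩ := hu
  have hD₀ : 0 ≤ D := Metric.infDist_nonneg.trans (hD 0)
  have hR₀ : 0 ≤ R := (norm_nonneg _).trans (hR 0)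
  have hM₀ : 0 ≤ M := (norm_nonneg _).trans (hM 0)
  refine (bdd_iff_exists_infDist_le hne hub).2
    ⟨κ₁ D + max (κ₂ R) (κ₂ D) + κ₂ M, fun i => ?_⟩
  have state_le : κ₁ (Metric.infDist (x i) (A i)) ≤ κ₁ D :=
    hκ₁ Metric.infDist_nonneg hD₀ (hD i)
  have input_le : κ₂ ‖u i‖ ≤ κ₂ M := hκ₂ (norm_nonneg _) hM₀ (hM i)
  have neighbour_norm_le : κ₂ ‖fun j : I i => x j‖ ≤ κ₂ R :=
    hκ₂ (norm_nonneg _) hR₀ ((pi_norm_le_iff_of_nonneg hR₀).2 fun j => hR j)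
  have neighbour_infDist_le : κ₂ (⨆ j : I i, Metric.infDist (x j) (A j)) ≤ κ₂ D :=
    hκ₂ (Real.iSup_nonneg fun _ => Metric.infDist_nonneg) hD₀ (Real.iSup_le (fun j => hD j) hD₀)
  rcases hKb i (x i) (fun j => x j) (u i) with h_norm | h_infDist
  · exact h_norm.trans (by gcongr; exact le_max_of_le_left neighbour_norm_le)
  · exact h_infDist.trans (by gcongr; exact le_max_of_le_right neighbour_infDist_le)

/-- Uniform `K`-boundedness of the subsystems with respect to uniformly bounded sets
`A_i` implies well-posedness of the network. -/
theorem stmt11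
    [∀ i, NormedSpace ℝ (E i)] [∀ i, FiniteDimensional ℝ (E i)] [∀ i, Nontrivial (E i)]
    [∀ i, NormedSpace ℝ (P i)] [∀ i, FiniteDimensional ℝ (P i)] [∀ i, Nontrivial (P i)]
    (hself : ∀ i, i ∉ I i)
    (hloc : ∀ i, {j | i ∈ I j}.Finite)
    (f : ∀ i, E i → ((j : I i) → E j.1) → P i → E i)
    (hf : ∀ i, Continuous fun q : E i × ((j : I i) → E j.1) × P i => f i q.1 q.2.1 q.2.2)
    (A : ∀ i, Set (E i)) (hne : ∀ i, (A i).Nonempty) (hcl : ∀ i, IsClosed (A i))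
    (hub : ∃ C : ℝ, 0 < C ∧ ∀ i, ∀ a ∈ A i, ‖a‖ ≤ C)
    (κ₁ κ₂ : ℝ → ℝ) (hκ₁ : ClassKinf κ₁) (hκ₂ : ClassKinf κ₂)
    (hKb :
      (∀ (i : ℕ) (ξi : E i) (ξb : (j : I i) → E j.1) (μi : P i),
          Metric.infDist (f i ξi ξb μi) (A i) ≤
            κ₁ (Metric.infDist ξi (A i)) + κ₂ ‖ξb‖ + κ₂ ‖μi‖) ∨
      (∀ (i : ℕ) (ξi : E i) (ξb : (j : I i) → E j.1) (μi : P i),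
          Metric.infDist (f i ξi ξb μi) (A i) ≤
            κ₁ (Metric.infDist ξi (A i)) +
              κ₂ (⨆ j : I i, Metric.infDist (ξb j) (A j.1)) + κ₂ ‖μi‖)) :
    ∀ (x : ∀ i, E i) (u : ∀ i, P i), Bdd x → Bdd u → Bdd (netF I f x u) :=
  stmt11_general I f A hne (hub.imp fun _ h => h.2) κ₁ κ₂ hκ₁.monotoneOn hκ₂.monotoneOn
    fun i ξi ξb μi => hKb.imp (· i ξi ξb μi) (· i ξi ξb μi)

end Network
end
end

section
/- Consider a well-posed infinite network Σ with nonempty closed sets A_i ⊆ ℝ^{n_i}, let A = X ∩ ∏_{i∈ℕ} A_i be nonempty, and suppose the Lyapunov-type assumptions and the uniformity assumptions hold for some M ∈ ℕ. Then the function V(ξ) := sup_{i∈ℕ} W_i(ξ_i) is finite for every ξ ∈ X and satisfies: (i) V(x(M,ξ,u)) ≤ max{α(V(ξ)), γ̄_u(‖u‖_∞)} for all ξ ∈ X and all admissible inputs u, and (ii) ω̲(|ξ|_A) ≤ V(ξ) ≤ ω̄(|ξ|_A) for all ξ ∈ X. -/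
noncomputable section

section Network

variable {E : ℕ → Type*} [∀ i, NormedAddCommGroup (E i)]
variable {P : ℕ → Type*} [∀ i, NormedAddCommGroup (P i)]

variable (I : ℕ → Finset ℕ)

/-!
The distance to a product set in `ℓ∞` is the supremum of the distances of the components: points of
the `A i` that are uniformly almost nearest to the components of a bounded sequence form a bounded
sequence again. The lower bound on `V` follows because a continuous nondecreasing function commutes
with suprema; the upper bound and the decay estimate follow by monotonicity.
-/

section Suprema

variable {ι : Type*} [Nonempty ι]

lemma map_ciSup_of_continuousWithinAt {α β : Type*}
    [ConditionallyCompleteLinearOrder α] [TopologicalSpace α] [OrderTopology α]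
    [ConditionallyCompleteLinearOrder β] [TopologicalSpace β] [OrderClosedTopology β]
    {f : α → β} {s : Set α} {g : ι → α} (hcont : ContinuousWithinAt f s (⨆ i, g i))
    (hmono : MonotoneOn f s) (hmem : ∀ i, g i ∈ s) (hbdd : BddAbove (Set.range g)) :
    f (⨆ i, g i) = ⨆ i, f (g i) := by
  have hrange : Set.range g ⊆ s := Set.range_subset_iff.2 hmem
  have himage : f (⨆ i, g i) = sSup (f '' Set.range g) :=
    (hmono.mono hrange).map_csSup_of_continuousWithinAt (hcont.mono hrange)
      (Set.range_nonempty g) hbdd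
  rwa [← Set.range_comp] at himage

lemma ciSup_le_max_of_gain_le {κ : Type*} [Nonempty κ] {v : κ → ℝ} {w : ι → ℝ} {g : ι → κ → ℝ}
    {b : ι → ℝ} {α : ℝ → ℝ} {c : ℝ} (hα : MonotoneOn α (Set.Ici 0)) (hv_nonneg : ∀ j, 0 ≤ v j)
    (hv : BddAbove (Set.range v)) (hg : ∀ i j, g i j ≤ α (v j)) (hb : ∀ i, b i ≤ c)
    (hw : ∀ i, w i ≤ max (⨆ j, g i j) (b i)) :
    ⨆ i, w i ≤ max (α (⨆ j, v j)) c := by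
  have hαv : ∀ j, α (v j) ≤ α (⨆ j, v j) := fun j =>
    hα (hv_nonneg j) (Real.iSup_nonneg hv_nonneg) (le_ciSup hv j)
  exact ciSup_le fun i =>
    (hw i).trans (max_le_max (ciSup_le fun j => (hg i j).trans (hαv j)) (hb i))

end Suprema

lemma Bdd.sub {x y : ∀ i, E i} : Bdd x → Bdd y → Bdd (x - y) :=
  fun ⟨C, hC⟩ ⟨D, hD⟩ => ⟨C + D, fun i => norm_sub_le_of_le (hC i) (hD i)⟩

lemma Bdd.norm_le_supNorm {x : ∀ i, E i} (hx : Bdd x) (i : ℕ) : ‖x i‖ ≤ supNorm x :=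
  le_ciSup (hx.imp fun _ hC => Set.forall_mem_range.2 hC) i

lemma supNorm_nonneg (x : ∀ i, E i) : 0 ≤ supNorm x :=
  Real.iSup_nonneg fun _ => norm_nonneg _

lemma inputNorm_nonneg (u : ℕ → ∀ i, P i) : 0 ≤ inputNorm u :=
  Real.iSup_nonneg fun k => supNorm_nonneg (u k)

lemma distA_le_supNorm_sub (x : ∀ i, E i) {S : Set (∀ i, E i)} {y : ∀ i, E i} (hy : y ∈ S) :
    distA x S ≤ supNorm (x - y) :=
  csInf_le ⟨0, Set.forall_mem_image.2 fun z _ => supNorm_nonneg (x - z)⟩ (Set.mem_image_of_mem _ hy)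

section DistanceToProduct

variable {A : ∀ i, Set (E i)} {ξ : ∀ i, E i}

lemma infDist_le_distA (hξ : Bdd ξ) (hA : (setA A).Nonempty) (i : ℕ) :
    Metric.infDist (ξ i) (A i) ≤ distA ξ (setA A) := by
  refine le_csInf (hA.image _) (Set.forall_mem_image.2 fun y hy => ?_)
  calc Metric.infDist (ξ i) (A i) ≤ dist (ξ i) (y i) := Metric.infDist_le_dist_of_mem (hy.2 i)
    _ = ‖(ξ - y) i‖ := dist_eq_norm _ _
    _ ≤ supNorm (ξ - y) := (hξ.sub hy.1).norm_le_supNorm i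

lemma distA_le_of_forall_infDist_lt (hξ : Bdd ξ) (hne : ∀ i, (A i).Nonempty) {r : ℝ}
    (hr : ∀ i, Metric.infDist (ξ i) (A i) < r) :
    distA ξ (setA A) ≤ r := by
  choose y hyA hy using fun i => (Metric.infDist_lt_iff (hne i)).1 (hr i)
  have hdiff : ∀ i, ‖(ξ - y) i‖ ≤ r := fun i => (dist_eq_norm (ξ i) (y i)).symm.trans_le (hy i).le
  have hbdd : Bdd y := sub_sub_cancel ξ y ▸ hξ.sub ⟨r, hdiff⟩
  have hmem : y ∈ setA A := ⟨hbdd, hyA⟩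
  exact (distA_le_supNorm_sub ξ hmem).trans (ciSup_le hdiff)

lemma bddAbove_range_infDist (hξ : Bdd ξ) (hA : (setA A).Nonempty) :
    BddAbove (Set.range fun i => Metric.infDist (ξ i) (A i)) :=
  ⟨distA ξ (setA A), Set.forall_mem_range.2 (infDist_le_distA hξ hA)⟩

lemma distA_setA_eq_iSup_infDist (hξ : Bdd ξ) (hA : (setA A).Nonempty) :
    distA ξ (setA A) = ⨆ i, Metric.infDist (ξ i) (A i) := by
  have hne : ∀ i, (A i).Nonempty := fun i => ⟨_, hA.some_mem.2 i⟩
  refine le_antisymm (le_of_forall_gt_imp_ge_of_dense fun r hr => ?_)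
    (ciSup_le (infDist_le_distA hξ hA))
  exact distA_le_of_forall_infDist_lt hξ hne fun i =>
    (le_ciSup (bddAbove_range_infDist hξ hA) i).trans_lt hr

lemma apply_infDist_le_apply_distA {ω : ℝ → ℝ} (hω : MonotoneOn ω (Set.Ici 0)) (hξ : Bdd ξ)
    (hA : (setA A).Nonempty) (i : ℕ) :
    ω (Metric.infDist (ξ i) (A i)) ≤ ω (distA ξ (setA A)) :=
  have hle := infDist_le_distA hξ hA i
  hω Metric.infDist_nonneg (Metric.infDist_nonneg.trans hle) hle

lemma apply_distA_eq_iSup_apply_infDist {ω : ℝ → ℝ} (hcont : ContinuousOn ω (Set.Ici 0))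
    (hmono : MonotoneOn ω (Set.Ici 0)) (hξ : Bdd ξ) (hA : (setA A).Nonempty) :
    ω (distA ξ (setA A)) = ⨆ i, ω (Metric.infDist (ξ i) (A i)) := by
  rw [distA_setA_eq_iSup_infDist hξ hA]
  exact map_ciSup_of_continuousWithinAt
    (hcont _ (Real.iSup_nonneg fun _ => Metric.infDist_nonneg)) hmono
    (fun _ => Metric.infDist_nonneg) (bddAbove_range_infDist hξ hA)

end DistanceToProduct

theorem stmt13_general
    (F : (∀ i, E i) → (∀ i, P i) → ∀ i, E i)
    (A : ∀ i, Set (E i)) (hA : (setA A).Nonempty) (M : ℕ)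
    (W : ∀ i, E i → ℝ) (hW_nonneg : ∀ i x, 0 ≤ W i x)
    (ωlb ωub : ℝ → ℝ) (hωlb_cont : ContinuousOn ωlb (Set.Ici 0)) (hωlb : MonotoneOn ωlb (Set.Ici 0))
    (hωub : MonotoneOn ωub (Set.Ici 0))
    (hlower : ∀ i x, ωlb (Metric.infDist x (A i)) ≤ W i x)
    (hupper : ∀ i x, W i x ≤ ωub (Metric.infDist x (A i)))
    (γij : ℕ → ℕ → ℝ → ℝ) (α : ℝ → ℝ) (hα : MonotoneOn α (Set.Ici 0))
    (hγ : ∀ i j s, 0 ≤ s → γij i j s ≤ α s)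
    (γiu : ℕ → ℝ → ℝ) (γu : ℝ → ℝ) (hγu : ∀ i s, 0 ≤ s → γiu i s ≤ γu s)
    (hdecay : ∀ ξ : ∀ i, E i, Bdd ξ → ∀ u : ℕ → ∀ i, P i, AdmInput u →
      ∀ i, W i (traj F ξ u M i) ≤ max (⨆ j, γij i j (W j (ξ j))) (γiu i (inputNorm u)))
    (ξ : ∀ i, E i) (hξ : Bdd ξ) :
    (BddAbove (Set.range fun i => W i (ξ i)) ∧
      ωlb (distA ξ (setA A)) ≤ (⨆ i, W i (ξ i)) ∧
      (⨆ i, W i (ξ i)) ≤ ωub (distA ξ (setA A))) ∧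
    ∀ u : ℕ → ∀ i, P i, AdmInput u →
      (⨆ i, W i (traj F ξ u M i)) ≤ max (α (⨆ i, W i (ξ i))) (γu (inputNorm u)) := by
  have hle : ∀ i, W i (ξ i) ≤ ωub (distA ξ (setA A)) := fun i =>
    (hupper i (ξ i)).trans (apply_infDist_le_apply_distA hωub hξ hA i)
  have hbdd : BddAbove (Set.range fun i => W i (ξ i)) := ⟨_, Set.forall_mem_range.2 hle⟩
  have hge : ωlb (distA ξ (setA A)) ≤ ⨆ i, W i (ξ i) :=
    (apply_distA_eq_iSup_apply_infDist hωlb_cont hωlb hξ hA).trans_le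
      (ciSup_mono hbdd fun i => hlower i (ξ i))
  refine ⟨⟨hbdd, hge, ciSup_le hle⟩, fun u hu => ?_⟩
  exact ciSup_le_max_of_gain_le hα (fun j => hW_nonneg j (ξ j)) hbdd
    (fun i j => hγ i j _ (hW_nonneg j (ξ j))) (fun i => hγu i _ (inputNorm_nonneg u))
    (hdecay ξ hξ u hu)

/-- Small-gain construction: `V(ξ) = sup_i W_i(ξ_i)` is a finite, coercive
`M`-step ISS Lyapunov function for the infinite network. -/
theorem stmt13
    [∀ i, NormedSpace ℝ (E i)] [∀ i, FiniteDimensional ℝ (E i)] [∀ i, Nontrivial (E i)]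
    [∀ i, NormedSpace ℝ (P i)] [∀ i, FiniteDimensional ℝ (P i)] [∀ i, Nontrivial (P i)]
    (hself : ∀ i, i ∉ I i)
    (hloc : ∀ i, {j | i ∈ I j}.Finite)
    (f : ∀ i, E i → ((j : I i) → E j.1) → P i → E i)
    (hf : ∀ i, Continuous fun q : E i × ((j : I i) → E j.1) × P i => f i q.1 q.2.1 q.2.2)
    (hwp : ∀ (x : ∀ i, E i) (u : ∀ i, P i), Bdd x → Bdd u → Bdd (netF I f x u))
    (A : ∀ i, Set (E i)) (hne : ∀ i, (A i).Nonempty) (hcl : ∀ i, IsClosed (A i))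
    (hAne : (setA A).Nonempty)
    (M : ℕ) (hM : 0 < M)
    -- Lyapunov-type assumptions
    (W : ∀ i, E i → ℝ) (hWcont : ∀ i, Continuous (W i)) (hWnn : ∀ i ξi, 0 ≤ W i ξi)
    (ωl ωu : ℕ → ℝ → ℝ) (hωl : ∀ i, ClassKinf (ωl i)) (hωu : ∀ i, ClassKinf (ωu i))
    (hsandwich : ∀ (i : ℕ) (ξi : E i),
      ωl i (Metric.infDist ξi (A i)) ≤ W i ξi ∧ W i ξi ≤ ωu i (Metric.infDist ξi (A i)))
    (γij : ℕ → ℕ → ℝ → ℝ)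
    (hγij : ∀ i j, ClassKinf (γij i j) ∨ γij i j = fun _ => 0)
    (γiu : ℕ → ℝ → ℝ) (hγiu : ∀ i, ClassK (γiu i))
    (hdecay : ∀ (ξ : ∀ i, E i), Bdd ξ → ∀ u : ℕ → ∀ i, P i, AdmInput u →
      ∀ i, W i (traj (netF I f) ξ u M i) ≤
        max (⨆ j, γij i j (W j (ξ j))) (γiu i (inputNorm u)))
    -- Uniformity assumptions
    (ωlb ωub : ℝ → ℝ) (hωlb : ClassKinf ωlb) (hωub : ClassKinf ωub)
    (hunifω : ∀ (i : ℕ) (s : ℝ), 0 ≤ s →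
      ωlb s ≤ ωl i s ∧ ωl i s ≤ ωu i s ∧ ωu i s ≤ ωub s)
    (α : ℝ → ℝ) (hα : ClassKinf α) (hαid : ∀ s : ℝ, 0 < s → α s < s)
    (hunifγ : ∀ (i j : ℕ) (s : ℝ), 0 ≤ s → γij i j s ≤ α s)
    (γu : ℝ → ℝ) (hγu : ClassK γu)
    (hunifγu : ∀ (i : ℕ) (s : ℝ), 0 ≤ s → γiu i s ≤ γu s)
    :
    ∀ (ξ : ∀ i, E i), Bdd ξ →
      (BddAbove (Set.range fun i => W i (ξ i)) ∧
        ωlb (distA ξ (setA A)) ≤ (⨆ i, W i (ξ i)) ∧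
        (⨆ i, W i (ξ i)) ≤ ωub (distA ξ (setA A))) ∧
      ∀ u : ℕ → ∀ i, P i, AdmInput u →
        (⨆ i, W i (traj (netF I f) ξ u M i)) ≤
          max (α (⨆ i, W i (ξ i))) (γu (inputNorm u)) := by
  exact stmt13_general (netF I f) A hAne M W hWnn ωlb ωub hωlb.1.1 hωlb.1.2.1.monotoneOn
    hωub.1.2.1.monotoneOn
    (fun i x => (hunifω i _ Metric.infDist_nonneg).1.trans (hsandwich i x).1)
    (fun i x => (hsandwich i x).2.trans (hunifω i _ Metric.infDist_nonneg).2.2)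
    γij α hα.1.2.1.monotoneOn hunifγ γiu γu hunifγu hdecay

end Network
end
end
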